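/- Let f ∈ ℤ[x] with deg(f) ≥ 3, or deg(f) = 2 with leading coefficient at least 2 (positive leading coefficient in all cases). Then there exist positive integers n₀, a, b such that f(n₀) = (n₀ + a)(n₀ + b). -/

import Mathlib

open Polynomial in
theorem ev_pos (P : Polynomial ℤ) (hd : 0 < P.natDegree) (hl : 0 < P.leadingCoeff) :
    ∃ N : ℤ, ∀ n : ℤ, N ≤ n → 0 < P.eval n := by
  have hinj : Function.Injective (Int.castRingHom ℝ) := Int.cast_injective
  have h := Polynomial.tendsto_atTop_of_leadingCoeff_nonneg (P.map (Int.castRingHom ℝ))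
    (by rw [Polynomial.degree_map_eq_of_injective hinj]
        exact Polynomial.natDegree_pos_iff_degree_pos.mp hd)
    (by rw [Polynomial.leadingCoeff_map_of_injective hinj]
        simpa using hl.le)
  have h2 := (h.comp (tendsto_intCast_atTop_atTop (R := ℝ))).eventually_gt_atTop 0
  obtain ⟨N, hN⟩ := Filter.eventually_atTop.mp h2
  refine ⟨N, fun n hn => ?_⟩
  have h3 := hN n hn
  simp only [Function.comp] at h3
  have h4 := Polynomial.eval_intCast_map (Int.castRingHom ℝ) P n
  rw [h4] at h3
  simpa using h3

open Polynomial in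
theorem schildkraut_factorization (f : Polynomial ℤ)
    (h : (3 ≤ f.natDegree ∧ 0 < f.leadingCoeff) ∨
          (f.natDegree = 2 ∧ 2 ≤ f.leadingCoeff)) :
    ∃ n₀ a b : ℤ, 0 < n₀ ∧ 0 < a ∧ 0 < b ∧ f.eval n₀ = (n₀ + a) * (n₀ + b) := by
  have hd2 : 2 ≤ f.natDegree := by omega
  have hl0 : 0 < f.leadingCoeff := by omega
  have key1 : ∃ N : ℤ, ∀ n : ℤ, N ≤ n → 0 < (C 2 * f - C 3 * X ^ 2).eval n := by
    have hle : (C 2 * f - C 3 * X ^ 2).natDegree ≤ f.natDegree := by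
      refine (natDegree_sub_le _ _).trans (max_le (natDegree_C_mul_le _ _) ?_)
      exact (natDegree_C_mul_X_pow_le _ _).trans hd2
    have hc : 0 < (C 2 * f - C 3 * X ^ 2).coeff f.natDegree := by
      rw [coeff_sub, coeff_C_mul, coeff_C_mul, coeff_X_pow, coeff_natDegree]
      split_ifs <;> omega
    have hdeg := natDegree_eq_of_le_of_coeff_ne_zero hle hc.ne'
    apply ev_pos
    · omega
    · rw [leadingCoeff, hdeg]; exact hc
  have key2 : ∃ N : ℤ, ∀ n : ℤ, N ≤ n → 0 < ((f.comp (-X)) ^ 2 - C 16 * X ^ 2).eval n := by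
    have hg : (f.comp (-X)).natDegree = f.natDegree := by
      rw [natDegree_comp, natDegree_neg, natDegree_X, mul_one]
    have hg0 : f.comp (-X) ≠ 0 := by
      intro h0; rw [h0] at hg; simp at hg; omega
    have hq : (C (16:ℤ) * X ^ 2).degree < ((f.comp (-X)) ^ 2).degree := by
      refine (degree_C_mul_X_pow_le _ _).trans_lt ?_
      rw [degree_eq_natDegree (pow_ne_zero 2 hg0), natDegree_pow, hg]
      exact_mod_cast (by omega : 2 < 2 * f.natDegree)
    apply ev_pos
    · rw [natDegree_sub_eq_left_of_natDegree_lt, natDegree_pow, hg]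
      · omega
      · refine (natDegree_C_mul_X_pow_le _ _).trans_lt ?_
        rw [natDegree_pow, hg]; omega
    · rw [leadingCoeff_sub_of_degree_lt hq, leadingCoeff_pow]
      have := leadingCoeff_ne_zero.mpr hg0
      positivity
  obtain ⟨N, hN⟩ := key1
  obtain ⟨M, hM⟩ := key2
  obtain ⟨m, hm1, hmN, hmM⟩ : ∃ m : ℤ, 1 ≤ m ∧ N ≤ m ∧ M ≤ m :=
    ⟨max 1 (max N M), by simp, by simp, by simp⟩
  have h2 := hM m hmM
  simp only [eval_sub, eval_pow, eval_comp, eval_neg, eval_X, eval_mul, eval_C] at h2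
  set D := |f.eval (-m)| with hD
  have hD4 : 4 * m < D := by
    apply lt_abs.mpr
    apply lt_abs.mp
    apply lt_of_pow_lt_pow_left₀ 2 (abs_nonneg _)
    rw [sq_abs]; linarith
  have h1 := hN (D - m) (by linarith)
  simp only [eval_sub, eval_pow, eval_X, eval_mul, eval_C] at h1
  have hdvd : D ∣ f.eval (D - m) := by
    have h3 := sub_dvd_eval_sub (D - m) (-m) f
    have h4 : D ∣ f.eval (-m) := (abs_dvd _ _).mpr dvd_rfl
    have h5 : D - m - -m = D := by ring
    rw [h5] at h3
    exact (dvd_sub_left h4).mp h3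
  obtain ⟨q, hq⟩ := hdvd
  refine ⟨D - m, m, q - (D - m), by linarith, by linarith, ?_, by rw [hq]; ring⟩
  have : D * (D - m) < D * q := by
    rw [← hq]; nlinarith
  have := lt_of_mul_lt_mul_left this (by linarith)
  linarith
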